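/- Let Λ ∈ ℝ^{n×n} be symmetric positive semidefinite, W ∈ ℝ^{n×d}, δ > 0, and m ∈ ℝ. If δ + 1/2 + |m|·‖Λ‖₂·‖W‖₂ ≤ ‖Λ‖_i, then Λ − δI is positive definite (hence invertible) and ‖(Λ − δI)^{-1} ((1/2)I − mΛW)‖₂ ≤ 1. -/

import Mathlib

open Matrix BigOperators

/-- Euclidean norm of a vector. -/
noncomputable def vnorm {k : ℕ} (v : Fin k → ℝ) : ℝ := Real.sqrt (v ⬝ᵥ v)

/-- Spectral norm of a matrix: the largest singular value, i.e. the supremum of ‖Ax‖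
over unit vectors x. -/
noncomputable def spNorm {n d : ℕ} (A : Matrix (Fin n) (Fin d) ℝ) : ℝ :=
  sSup {c | ∃ x : Fin d → ℝ, vnorm x = 1 ∧ c = vnorm (A *ᵥ x)}

/-- Infimum norm of a matrix: the smallest singular value (square root of the smallest
eigenvalue of AᵀA), i.e. the infimum of ‖Ax‖ over unit vectors x. -/
noncomputable def infNorm {n d : ℕ} (A : Matrix (Fin n) (Fin d) ℝ) : ℝ :=
  sInf {c | ∃ x : Fin d → ℝ, vnorm x = 1 ∧ c = vnorm (A *ᵥ x)}

/-- The rectangular identity block. -/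
def rectId (n d : ℕ) : Matrix (Fin n) (Fin d) ℝ :=
  Matrix.of fun i j => if (i : ℕ) = (j : ℕ) then 1 else 0

/-!
Since `Λ` is positive semidefinite, its eigenvalues are its singular values, so they are all at
least `c = ‖Λ‖ᵢ`, and hence `Λ - δI ≥ (c - δ)I` in the Loewner order. Cauchy–Schwarz turns this
coercivity into `‖(Λ - δI)⁻¹‖₂ ≤ (c - δ)⁻¹`, while the hypothesis and the triangle inequality give
`‖½I - mΛW‖₂ ≤ ½ + |m| ‖Λ‖₂ ‖W‖₂ ≤ c - δ`.
-/

section Loewner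

open scoped ComplexOrder

variable {𝕜 n : Type*} [RCLike 𝕜] [DecidableEq n] {A : Matrix n n 𝕜} {c : ℝ}

lemma posDef_of_posSemidef_sub_smul_one (hc : 0 < c)
    (hA : (A - c • (1 : Matrix n n 𝕜)).PosSemidef) : A.PosDef := by
  simpa using PosDef.posSemidef_add hA (PosDef.one.smul hc)

variable [Fintype n]

open scoped MatrixOrder in
lemma posSemidef_sub_smul_one_of_le_eigenvalues (hA : A.IsHermitian)
    (hc : ∀ i, c ≤ hA.eigenvalues i) : (A - c • (1 : Matrix n n 𝕜)).PosSemidef := by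
  have hspec : ∀ x ∈ spectrum ℝ A, c ≤ x := by
    rw [hA.spectrum_real_eq_range_eigenvalues]
    exact Set.forall_mem_range.2 hc
  rw [← Algebra.algebraMap_eq_smul_one, ← Matrix.le_iff]
  exact (algebraMap_le_iff_le_spectrum hA.isSelfAdjoint).2 hspec

lemma mul_norm_le_norm_toEuclideanLin_of_posSemidef_sub
    (hA : (A - c • (1 : Matrix n n 𝕜)).PosSemidef) (x : EuclideanSpace 𝕜 n) :
    c * ‖x‖ ≤ ‖toEuclideanLin A x‖ := by
  obtain rfl | hx := eq_or_ne x 0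
  · simp
  have hcoercive : c * ‖x‖ ^ 2 ≤ RCLike.re (inner 𝕜 (toEuclideanLin A x) x) := by
    have hnonneg := (isPositive_toEuclideanLin_iff.2 hA).re_inner_nonneg_left x
    have hshift : toEuclideanLin (A - c • (1 : Matrix n n 𝕜)) x =
        toEuclideanLin A x - (c : 𝕜) • x := by
      ext i
      simp [smul_mulVec, RCLike.real_smul_eq_coe_mul]
    rw [hshift, inner_sub_left, inner_smul_left, inner_self_eq_norm_sq_to_K] at hnonneg
    norm_cast at hnonneg
    simpa using hnonneg
  refine le_of_mul_le_mul_right ?_ (norm_pos_iff.2 hx)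
  calc c * ‖x‖ * ‖x‖ = c * ‖x‖ ^ 2 := by ring
    _ ≤ RCLike.re (inner 𝕜 (toEuclideanLin A x) x) := hcoercive
    _ ≤ ‖toEuclideanLin A x‖ * ‖x‖ := re_inner_le_norm _ _

open scoped Matrix.Norms.L2Operator

lemma l2_opNorm_inv_le (hc : 0 < c) (hA : (A - c • (1 : Matrix n n 𝕜)).PosSemidef) :
    ‖A⁻¹‖ ≤ c⁻¹ := by
  have hdet : IsUnit A.det := (posDef_of_posSemidef_sub_smul_one hc hA).isUnit.map detMonoidHom
  rw [l2_opNorm_def]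
  refine ContinuousLinearMap.opNorm_le_bound _ (inv_nonneg.2 hc.le) fun y => ?_
  have hinv : toEuclideanLin A (toEuclideanLin A⁻¹ y) = y := by
    ext i
    simp [mulVec_mulVec, mul_nonsing_inv A hdet]
  rw [le_inv_mul_iff₀ hc]
  simpa [hinv] using mul_norm_le_norm_toEuclideanLin_of_posSemidef_sub hA (toEuclideanLin A⁻¹ y)

end Loewner

lemma vnorm_eq_norm_toLp {k : ℕ} (v : Fin k → ℝ) : vnorm v = ‖WithLp.toLp 2 v‖ := by
  simp [vnorm, EuclideanSpace.norm_eq, dotProduct, pow_two]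

lemma infNorm_le_eigenvalues {n : ℕ} {Λ : Matrix (Fin n) (Fin n) ℝ} (hΛ : Λ.PosSemidef)
    (i : Fin n) : infNorm Λ ≤ hΛ.isHermitian.eigenvalues i := by
  set v := hΛ.isHermitian.eigenvectorBasis i
  have hv : ‖v‖ = 1 := hΛ.isHermitian.eigenvectorBasis.orthonormal.1 i
  have hbdd : BddBelow {c | ∃ x : Fin n → ℝ, vnorm x = 1 ∧ c = vnorm (Λ *ᵥ x)} :=
    ⟨0, by rintro _ ⟨x, -, rfl⟩; exact Real.sqrt_nonneg _⟩
  refine csInf_le hbdd ⟨v.ofLp, by simpa [vnorm_eq_norm_toLp], ?_⟩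
  rw [hΛ.isHermitian.mulVec_eigenvectorBasis, vnorm_eq_norm_toLp, WithLp.toLp_smul, norm_smul,
    WithLp.toLp_ofLp, hv, mul_one, Real.norm_of_nonneg (hΛ.eigenvalues_nonneg i)]

section SpectralNorm

open scoped Matrix.Norms.L2Operator

variable {n d : ℕ}

lemma spNorm_eq_l2_opNorm (A : Matrix (Fin n) (Fin d) ℝ) : spNorm A = ‖A‖ := by
  rw [l2_opNorm_def, ← ContinuousLinearMap.sSup_sphere_eq_norm, spNorm]
  congr 1
  ext c
  simp [vnorm_eq_norm_toLp, (WithLp.toLp_surjective 2).exists, eq_comm]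

lemma spNorm_nonneg (A : Matrix (Fin n) (Fin d) ℝ) : 0 ≤ spNorm A :=
  spNorm_eq_l2_opNorm A ▸ norm_nonneg A

lemma spNorm_smul (a : ℝ) (A : Matrix (Fin n) (Fin d) ℝ) : spNorm (a • A) = |a| * spNorm A := by
  simp only [spNorm_eq_l2_opNorm, norm_smul, Real.norm_eq_abs]

lemma spNorm_sub_smul_mul_le {k : ℕ} (C : Matrix (Fin n) (Fin d) ℝ) (m : ℝ)
    (A : Matrix (Fin n) (Fin k) ℝ) (B : Matrix (Fin k) (Fin d) ℝ) :
    spNorm (C - m • (A * B)) ≤ spNorm C + |m| * spNorm A * spNorm B := by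
  simp only [spNorm_eq_l2_opNorm]
  calc ‖C - m • (A * B)‖ ≤ ‖C‖ + ‖m • (A * B)‖ := norm_sub_le _ _
    _ = ‖C‖ + |m| * ‖A * B‖ := by rw [norm_smul, Real.norm_eq_abs]
    _ ≤ ‖C‖ + |m| * (‖A‖ * ‖B‖) := by gcongr; exact l2_opNorm_mul A B
    _ = ‖C‖ + |m| * ‖A‖ * ‖B‖ := by rw [mul_assoc]

lemma spNorm_inv_mul_le_one {A : Matrix (Fin n) (Fin n) ℝ} {B : Matrix (Fin n) (Fin d) ℝ} {c : ℝ}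
    (hc : 0 < c) (hA : (A - c • (1 : Matrix (Fin n) (Fin n) ℝ)).PosSemidef) (hB : spNorm B ≤ c) :
    spNorm (A⁻¹ * B) ≤ 1 := by
  rw [spNorm_eq_l2_opNorm] at hB ⊢
  calc ‖A⁻¹ * B‖ ≤ ‖A⁻¹‖ * ‖B‖ := l2_opNorm_mul _ _
    _ ≤ c⁻¹ * c := by gcongr; exact l2_opNorm_inv_le hc hA
    _ = 1 := inv_mul_cancel₀ hc.ne'

lemma conjTranspose_rectId_mul_rectId :
    (rectId n d)ᴴ * rectId n d = diagonal fun j : Fin d => if (j : ℕ) < n then 1 else 0 := by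
  ext i j
  simp only [mul_apply, conjTranspose_apply, rectId, of_apply, star_trivial, ite_mul, one_mul,
    zero_mul, diagonal_apply]
  by_cases hi : (i : ℕ) < n
  · have hval (k : Fin n) : (k : ℕ) = i ↔ k = ⟨i, hi⟩ := by rw [Fin.ext_iff]
    simp [hval, hi, Fin.val_inj]
  · have hval (k : Fin n) : (k : ℕ) ≠ i := fun h => hi (h ▸ k.isLt)
    simp [hval, hi]

lemma spNorm_rectId_le_one : spNorm (rectId n d) ≤ 1 := by
  have hdiag : ‖(rectId n d)ᴴ * rectId n d‖ ≤ 1 := by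
    rw [conjTranspose_rectId_mul_rectId, l2_opNorm_diagonal]
    refine (pi_norm_le_iff_of_nonneg zero_le_one).2 fun j => ?_
    split_ifs <;> simp
  rw [l2_opNorm_conjTranspose_mul_self, ← abs_le_one_iff_mul_self_le_one, abs_norm] at hdiag
  rwa [spNorm_eq_l2_opNorm]

end SpectralNorm

theorem claim3_offdiag_bound_general {n d : ℕ} {Λ : Matrix (Fin n) (Fin n) ℝ}
    (hΛ : Λ.PosSemidef) (C W : Matrix (Fin n) (Fin d) ℝ) {a δ m : ℝ} (ha : 0 < a)
    (hC : spNorm C ≤ a) (h : δ + a + |m| * spNorm Λ * spNorm W ≤ infNorm Λ) :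
    (Λ - δ • (1 : Matrix (Fin n) (Fin n) ℝ)).PosDef ∧
      spNorm ((Λ - δ • (1 : Matrix (Fin n) (Fin n) ℝ))⁻¹ * (C - m • (Λ * W))) ≤ 1 := by
  have hnum := spNorm_sub_smul_mul_le C m Λ W
  have hgap : 0 < infNorm Λ - δ := by
    linarith [mul_nonneg (mul_nonneg (abs_nonneg m) (spNorm_nonneg Λ)) (spNorm_nonneg W)]
  have hcoercive : (Λ - δ • (1 : Matrix (Fin n) (Fin n) ℝ) -
      (infNorm Λ - δ) • (1 : Matrix (Fin n) (Fin n) ℝ)).PosSemidef := by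
    rw [sub_smul, sub_sub_sub_cancel_right]
    exact posSemidef_sub_smul_one_of_le_eigenvalues hΛ.isHermitian (infNorm_le_eigenvalues hΛ)
  exact ⟨posDef_of_posSemidef_sub_smul_one hgap hcoercive,
    spNorm_inv_mul_le_one hgap hcoercive (by linarith)⟩

/-- If δ + ½ + |m|·‖Λ‖₂·‖W‖₂ ≤ ‖Λ‖ᵢ for a symmetric positive semidefinite Λ and δ > 0,
then Λ − δI is positive definite and ‖(Λ − δI)⁻¹(½I − mΛW)‖₂ ≤ 1. -/
theorem claim3_offdiag_bound
    {n d : ℕ} (Λ : Matrix (Fin n) (Fin n) ℝ) (hΛ : Λ.PosSemidef)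
    (W : Matrix (Fin n) (Fin d) ℝ) (δ m : ℝ) (hδ : 0 < δ)
    (h : δ + 1 / 2 + |m| * spNorm Λ * spNorm W ≤ infNorm Λ) :
    (Λ - δ • (1 : Matrix (Fin n) (Fin n) ℝ)).PosDef ∧
      spNorm ((Λ - δ • (1 : Matrix (Fin n) (Fin n) ℝ))⁻¹ *
        ((1 / 2 : ℝ) • rectId n d - m • (Λ * W))) ≤ 1 :=
  claim3_offdiag_bound_general hΛ _ W one_half_pos
    (by simpa [spNorm_smul] using spNorm_rectId_le_one) h
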